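/- The monoid R(Φ_3iet) = { M_φ : φ is a 3iet preserving morphism with det M_φ ≠ 0 } of nonsingular incidence matrices of 3iet preserving morphisms (a monoid under matrix multiplication) is not finitely generated: there is no finite set S of matrices in R(Φ_3iet) such that every element of R(Φ_3iet) is a product of finitely many elements of S. -/

import Mathlib

/-!
The matrices `Mₙ = (1 n 0; 1 n+1 0; 1 0 1)` of the morphisms `A ↦ ABⁿ, B ↦ ABⁿ⁺¹, C ↦ AC` lie in
the monoid and are pairwise non-associated irreducible elements, so no finite set generates it.

*Membership* (`famMorph_preserves`). The interval exchange with parameters `(α, β, γ)` is the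
first-return map to the first interval of the exchange with parameters
`(α + β + γ, nα + (n+1)β, γ)`, and the return itineraries are exactly the images of the letters.

*A necessary condition* (`good_of_mem`). If `v` codes an exchange with `s = α + β`, `t = β + γ`,
then the sums along `v` of the weight `A ↦ t, B ↦ t - s, C ↦ -s` are increments of an orbit, hence
bounded by `s + t`. Let `v` be the image of a 3iet word containing `(AC)ᵏBᵏ` and let `k → ∞`: the
vectors (number of `A`s and `B`s, number of `B`s and `C`s) of the images of `AC` and of `B` must be
parallel. The same applies to the composition with `A ↦ A, B ↦ AB, C ↦ AC`. For a nonsingular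
incidence matrix the two relations say that `(1, -1, 1)` is a left eigenvector (`Good`).

*Irreducibility* (`famMat_irreducible_aux`). A matrix with that eigenvector induces a map of `ℤ²`
(quotienting by the eigenvector), of determinant `±1` when the matrix is unimodular. A factorization
`Mₙ = X * Y` induces one of `(n+1 n; 1 1)` into nonnegative matrices, of which there are few, and
comparing entries in each case shows that `X` or `Y` is the identity or the exchange of `A` and `C`.
The sum of the entries of a matrix does not see these trivial factors and separates the `Mₙ`.
-/


/-- The three-letter alphabet {A, B, C}. -/
inductive Letter : Type
  | A | B | C
  deriving DecidableEq

/-- Left-closed 3-interval exchange transformation with parameters (α, β, γ),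
defined piecewise on the domain [0, α+β+γ) (and extended by the same formulas
elsewhere). -/
noncomputable def Tleft (α β γ : ℝ) (x : ℝ) : ℝ :=
  if x < α then x + β + γ else if x < α + β then x - α + γ else x - α - β

/-- The inverse of `Tleft` on its domain. -/
noncomputable def TleftInv (α β γ : ℝ) (x : ℝ) : ℝ :=
  if x < γ then x + α + β else if x < β + γ then x + α - γ else x - β - γ

/-- Right-closed 3-interval exchange transformation with parameters (α, β, γ),
defined piecewise on the domain (0, α+β+γ]. -/
noncomputable def Tright (α β γ : ℝ) (x : ℝ) : ℝ :=
  if x ≤ α then x + β + γ else if x ≤ α + β then x - α + γ else x - α - β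

/-- The inverse of `Tright` on its domain. -/
noncomputable def TrightInv (α β γ : ℝ) (x : ℝ) : ℝ :=
  if x ≤ γ then x + α + β else if x ≤ β + γ then x + α - γ else x - β - γ

/-- ℤ-indexed iteration: nonnegative powers use `f`, negative powers use the
inverse map `g`. -/
noncomputable def zIter (f g : ℝ → ℝ) : ℤ → ℝ → ℝ
  | Int.ofNat n => f^[n]
  | Int.negSucc n => g^[n + 1]

/-- The letter coding of a point, left-closed convention:
A on [0,α), B on [α,α+β), C on [α+β,α+β+γ). -/
noncomputable def codeLeft (α β : ℝ) (x : ℝ) : Letter :=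
  if x < α then Letter.A else if x < α + β then Letter.B else Letter.C

/-- The letter coding of a point, right-closed convention:
A on (0,α], B on (α,α+β], C on (α+β,α+β+γ]. -/
noncomputable def codeRight (α β : ℝ) (x : ℝ) : Letter :=
  if x ≤ α then Letter.A else if x ≤ α + β then Letter.B else Letter.C

/-- The biinfinite word coding the orbit of x₀ under the left-closed
3-interval exchange transformation with parameters (α, β, γ). -/
noncomputable def uLeft (α β γ x₀ : ℝ) (n : ℤ) : Letter :=
  codeLeft α β (zIter (Tleft α β γ) (TleftInv α β γ) n x₀)

/-- The biinfinite word coding the orbit of x₀ under the right-closed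
3-interval exchange transformation with parameters (α, β, γ). -/
noncomputable def uRight (α β γ x₀ : ℝ) (n : ℤ) : Letter :=
  codeRight α β (zIter (Tright α β γ) (TrightInv α β γ) n x₀)

/-- A biinfinite word over {A,B,C} is a 3iet word if it codes the orbit of a
point under a 3-interval exchange transformation (in either convention) whose
parameters α, β, γ > 0 satisfy: α+β and β+γ are linearly independent over ℚ. -/
def Is3ietWord (u : ℤ → Letter) : Prop :=
  ∃ α β γ x₀ : ℝ, 0 < α ∧ 0 < β ∧ 0 < γ ∧
    LinearIndependent ℚ ![α + β, β + γ] ∧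
    ((x₀ ∈ Set.Ico (0 : ℝ) (α + β + γ) ∧ u = uLeft α β γ x₀) ∨
     (x₀ ∈ Set.Ioc (0 : ℝ) (α + β + γ) ∧ u = uRight α β γ x₀))

/-- A morphism over the alphabet {A,B,C}, determined by the images of the
three letters (as an endomorphism of the free monoid {A,B,C}*). -/
abbrev Morph := Letter → List Letter

/-- `IsImageWord φ u v` says that v is the biinfinite word
···φ(u₋₂)φ(u₋₁)φ(u₀)φ(u₁)···, in which the block φ(u₀) starts at position 0:
`c m` is the position at which the block φ(u_m) starts. -/
def IsImageWord (φ : Morph) (u v : ℤ → Letter) : Prop :=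
  ∃ c : ℤ → ℤ, c 0 = 0 ∧ (∀ m : ℤ, c (m + 1) = c m + (φ (u m)).length) ∧
    ∀ (m : ℤ) (i : ℕ) (h : i < (φ (u m)).length),
      v (c m + (i : ℤ)) = (φ (u m)).get ⟨i, h⟩

/-- A morphism is 3iet preserving if its letter images are nonempty (so that
it acts on biinfinite words) and it maps every 3iet word to a 3iet word. -/
def Preserves3iet (φ : Morph) : Prop :=
  (∀ a, φ a ≠ []) ∧
  ∀ u v : ℤ → Letter, Is3ietWord u → IsImageWord φ u v → Is3ietWord v

/-- The letters in order A, B, C. -/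
def ltr : Fin 3 → Letter := ![Letter.A, Letter.B, Letter.C]

/-- The incidence matrix of a morphism: its (i,j) entry is the number of
occurrences of the j-th letter in the image of the i-th letter. -/
def incMat (φ : Morph) : Matrix (Fin 3) (Fin 3) ℤ :=
  fun i j => ((φ (ltr i)).count (ltr j) : ℤ)

/-- The monoid R(Φ_3iet) of nonsingular incidence matrices of 3iet preserving
morphisms. -/
def RPhi3iet : Set (Matrix (Fin 3) (Fin 3) ℤ) :=
  {M | ∃ φ : Morph, Preserves3iet φ ∧ incMat φ = M ∧ M.det ≠ 0}

/-! ### Integer-indexed sequences with prescribed increments -/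

/-- A sequence indexed by `ℤ` may be prescribed by its value at `0` and its increments. -/
lemma exists_increments {G : Type*} [AddCommGroup G] (z₀ : G) (f : ℤ → G) :
    ∃ z : ℤ → G, z 0 = z₀ ∧ ∀ m, z (m + 1) = z m + f m := by
  refine ⟨fun m => match m with
    | Int.ofNat n => z₀ + ∑ i ∈ Finset.range n, f i
    | Int.negSucc n => z₀ - ∑ i ∈ Finset.range (n + 1), f (Int.negSucc i), ?_, ?_⟩
  · change z₀ + ∑ i ∈ Finset.range 0, f i = z₀
    simp
  · intro m
    rcases m with n | n
    · change z₀ + ∑ i ∈ Finset.range (n + 1), f i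
        = z₀ + ∑ i ∈ Finset.range n, f i + f (Int.ofNat n)
      rw [Finset.sum_range_succ, add_assoc]
      rfl
    · rcases n with _ | n
      · change z₀ + ∑ i ∈ Finset.range 0, f i
          = z₀ - ∑ i ∈ Finset.range (0 + 1), f (Int.negSucc i) + f (Int.negSucc 0)
        simp
      · change z₀ - ∑ i ∈ Finset.range (n + 1), f (Int.negSucc i)
          = z₀ - ∑ i ∈ Finset.range (n + 1 + 1), f (Int.negSucc i) + f (Int.negSucc (n + 1))
        rw [Finset.sum_range_succ _ (n + 1)]
        abel

lemma eq_of_increments {G : Type*} [AddCommGroup G] {y z : ℤ → G} {f : ℤ → G}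
    (h0 : y 0 = z 0) (hy : ∀ m, y (m + 1) = y m + f m) (hz : ∀ m, z (m + 1) = z m + f m) (m : ℤ) :
    y m = z m := by
  induction m using Int.induction_on with
  | zero => exact h0
  | succ i ih => rw [hy, hz, ih]
  | pred i ih =>
    have h1 := hy (-(i : ℤ) - 1)
    have h2 := hz (-(i : ℤ) - 1)
    rw [sub_add_cancel] at h1 h2
    rw [h1, h2] at ih
    exact add_right_cancel ih

/-! ### Orbits of interval exchanges -/

/-- A half-open interval, left-closed if `b` is true and right-closed otherwise. -/
def HalfOpen (b : Bool) (p q : ℝ) : Set ℝ := if b then Set.Ico p q else Set.Ioc p q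

/-- `y` is an orbit, indexed by `ℤ`, of the interval exchange with parameters `α, β, γ`
(left-closed or right-closed according to `b`), and `u` is its coding. -/
def IsCodedOrbit (b : Bool) (α β γ : ℝ) (u : ℤ → Letter) (y : ℤ → ℝ) : Prop :=
  ∀ n,
    (u n = Letter.A ∧ y n ∈ HalfOpen b 0 α ∧ y (n + 1) = y n + (β + γ)) ∨
    (u n = Letter.B ∧ y n ∈ HalfOpen b α (α + β) ∧ y (n + 1) = y n + (γ - α)) ∨
    (u n = Letter.C ∧ y n ∈ HalfOpen b (α + β) (α + β + γ) ∧ y (n + 1) = y n + -(α + β))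

lemma zIter_mem_and_succ {f g : ℝ → ℝ} {D : Set ℝ} (hf : ∀ x ∈ D, f x ∈ D) (hg : ∀ x ∈ D, g x ∈ D)
    (hfg : ∀ x ∈ D, f (g x) = x) {x : ℝ} (hx : x ∈ D) (n : ℤ) :
    zIter f g n x ∈ D ∧ zIter f g (n + 1) x = f (zIter f g n x) := by
  have hfm : ∀ n : ℕ, f^[n] x ∈ D := by
    intro n
    induction n with
    | zero => exact hx
    | succ n ih => rw [Function.iterate_succ_apply']; exact hf _ ih
  have hgm : ∀ n : ℕ, g^[n] x ∈ D := by
    intro n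
    induction n with
    | zero => exact hx
    | succ n ih => rw [Function.iterate_succ_apply']; exact hg _ ih
  rcases n with n | n
  · exact ⟨hfm n, Function.iterate_succ_apply' f n x⟩
  · refine ⟨hgm (n + 1), ?_⟩
    have key : f (g^[n + 1] x) = g^[n] x := by
      rw [Function.iterate_succ_apply']
      exact hfg _ (hgm n)
    rcases n with _ | n
    · exact key.symm
    · exact key.symm

lemma zIter_eq_of_orbit {f g : ℝ → ℝ} {y : ℤ → ℝ} (hf : ∀ n, f (y n) = y (n + 1))
    (hg : ∀ n, g (y (n + 1)) = y n) (n : ℤ) : zIter f g n (y 0) = y n := by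
  rcases n with n | n
  · change f^[n] (y 0) = y (n : ℤ)
    induction n with
    | zero => rfl
    | succ n ih => rw [Function.iterate_succ_apply', ih, hf]; push_cast; rfl
  · change g^[n + 1] (y 0) = y (Int.negSucc n)
    induction n with
    | zero => exact hg (-1)
    | succ n ih =>
      rw [Function.iterate_succ_apply', ih]
      exact hg (Int.negSucc (n + 1))

/-- A 3iet word is exactly the coding of a biinfinite orbit; this removes the iterates and treats
both conventions at once. -/
lemma is3ietWord_iff (u : ℤ → Letter) :
    Is3ietWord u ↔ ∃ α β γ : ℝ, 0 < α ∧ 0 < β ∧ 0 < γ ∧ LinearIndependent ℚ ![α + β, β + γ] ∧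
      ∃ b y, IsCodedOrbit b α β γ u y := by
  constructor
  · rintro ⟨α, β, γ, x₀, hα, hβ, hγ, hli, ⟨hx, rfl⟩ | ⟨hx, rfl⟩⟩
    · refine ⟨α, β, γ, hα, hβ, hγ, hli, true,
        fun n => zIter (Tleft α β γ) (TleftInv α β γ) n x₀, fun n => ?_⟩
      obtain ⟨h1, h2⟩ := zIter_mem_and_succ (f := Tleft α β γ) (g := TleftInv α β γ)
        (D := Set.Ico 0 (α + β + γ))
        (by
          rintro x ⟨h0, h1⟩
          unfold Tleft
          split_ifs <;> constructor <;> linarith)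
        (by
          rintro x ⟨h0, h1⟩
          unfold TleftInv
          split_ifs <;> constructor <;> linarith)
        (by
          rintro x ⟨h0, h1⟩
          unfold Tleft TleftInv
          split_ifs <;> linarith) hx n
      simp only [uLeft, h2]
      generalize zIter (Tleft α β γ) (TleftInv α β γ) n x₀ = w at h1
      obtain ⟨h0, h1⟩ := h1
      unfold codeLeft Tleft HalfOpen
      by_cases hA : w < α
      · left
        simp only [hA, if_true]
        exact ⟨trivial, ⟨h0, hA⟩, by ring⟩
      · by_cases hB : w < α + β
        · right; left
          simp only [hA, hB, if_true, if_false]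
          exact ⟨trivial, ⟨not_lt.1 hA, hB⟩, by ring⟩
        · right; right
          simp only [hA, hB, if_false]
          exact ⟨trivial, ⟨not_lt.1 hB, h1⟩, by ring⟩
    · refine ⟨α, β, γ, hα, hβ, hγ, hli, false,
        fun n => zIter (Tright α β γ) (TrightInv α β γ) n x₀, fun n => ?_⟩
      obtain ⟨h1, h2⟩ := zIter_mem_and_succ (f := Tright α β γ) (g := TrightInv α β γ)
        (D := Set.Ioc 0 (α + β + γ))
        (by
          rintro x ⟨h0, h1⟩
          unfold Tright
          split_ifs <;> constructor <;> linarith)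
        (by
          rintro x ⟨h0, h1⟩
          unfold TrightInv
          split_ifs <;> constructor <;> linarith)
        (by
          rintro x ⟨h0, h1⟩
          unfold Tright TrightInv
          split_ifs <;> linarith) hx n
      simp only [uRight, h2]
      generalize zIter (Tright α β γ) (TrightInv α β γ) n x₀ = w at h1
      obtain ⟨h0, h1⟩ := h1
      unfold codeRight Tright HalfOpen
      by_cases hA : w ≤ α
      · left
        simp only [hA, if_true]
        exact ⟨trivial, ⟨h0, hA⟩, by ring⟩
      · by_cases hB : w ≤ α + β
        · right; left
          simp only [hA, hB, if_true, if_false]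
          exact ⟨trivial, ⟨not_le.1 hA, hB⟩, by ring⟩
        · right; right
          simp only [hA, hB, if_false]
          exact ⟨trivial, ⟨not_le.1 hB, h1⟩, by ring⟩
  · rintro ⟨α, β, γ, hα, hβ, hγ, hli, b, y, hy⟩
    refine ⟨α, β, γ, y 0, hα, hβ, hγ, hli, ?_⟩
    cases b
    · right
      refine ⟨?_, funext fun n => ?_⟩
      · rcases hy 0 with ⟨_, ⟨h1, h2⟩, _⟩ | ⟨_, ⟨h1, h2⟩, _⟩ | ⟨_, ⟨h1, h2⟩, _⟩ <;>
          constructor <;> linarith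
      · unfold uRight
        rw [zIter_eq_of_orbit (y := y)]
        · unfold codeRight
          rcases hy n with ⟨h, ⟨h1, h2⟩, _⟩ | ⟨h, ⟨h1, h2⟩, _⟩ | ⟨h, ⟨h1, h2⟩, _⟩ <;>
            rw [h] <;> split_ifs <;> first | rfl | (exfalso; linarith)
        · intro n
          unfold Tright
          rcases hy n with ⟨_, ⟨h1, h2⟩, h⟩ | ⟨_, ⟨h1, h2⟩, h⟩ | ⟨_, ⟨h1, h2⟩, h⟩ <;>
            rw [h] <;> split_ifs <;> linarith
        · intro n
          unfold TrightInv
          rcases hy n with ⟨_, ⟨h1, h2⟩, h⟩ | ⟨_, ⟨h1, h2⟩, h⟩ | ⟨_, ⟨h1, h2⟩, h⟩ <;>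
            rw [h] <;> split_ifs <;> linarith
    · left
      refine ⟨?_, funext fun n => ?_⟩
      · rcases hy 0 with ⟨_, ⟨h1, h2⟩, _⟩ | ⟨_, ⟨h1, h2⟩, _⟩ | ⟨_, ⟨h1, h2⟩, _⟩ <;>
          constructor <;> linarith
      · unfold uLeft
        rw [zIter_eq_of_orbit (y := y)]
        · unfold codeLeft
          rcases hy n with ⟨h, ⟨h1, h2⟩, _⟩ | ⟨h, ⟨h1, h2⟩, _⟩ | ⟨h, ⟨h1, h2⟩, _⟩ <;>
            rw [h] <;> split_ifs <;> first | rfl | (exfalso; linarith)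
        · intro n
          unfold Tleft
          rcases hy n with ⟨_, ⟨h1, h2⟩, h⟩ | ⟨_, ⟨h1, h2⟩, h⟩ | ⟨_, ⟨h1, h2⟩, h⟩ <;>
            rw [h] <;> split_ifs <;> linarith
        · intro n
          unfold TleftInv
          rcases hy n with ⟨_, ⟨h1, h2⟩, h⟩ | ⟨_, ⟨h1, h2⟩, h⟩ | ⟨_, ⟨h1, h2⟩, h⟩ <;>
            rw [h] <;> split_ifs <;> linarith

/-! ### Images of biinfinite words under a morphism -/

/-- The letterwise weight `g`, pulled back along the morphism `φ`: the total weight of `φ a`. -/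
def pullWeight (φ : Morph) (g : Letter → ℝ) (a : Letter) : ℝ := ((φ a).map g).sum

lemma exists_imageWord (φ : Morph) (u : ℤ → Letter) :
    ∃ v, IsImageWord φ u v := by
  obtain ⟨c, hc0, hc⟩ := exists_increments (0 : ℤ) (fun m => ((φ (u m)).length : ℤ))
  have hmono : Monotone c := by
    refine monotone_int_of_le_succ fun m => ?_
    rw [hc]
    omega
  -- Blocks do not overlap, so a position determines its block and its place in the block.
  have huniq : ∀ m m' : ℤ, ∀ i i' : ℕ, i < (φ (u m)).length → i' < (φ (u m')).length →
      c m + i = c m' + i' → m = m' := by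
    intro m m' i i' hi hi' h
    rcases lt_trichotomy m m' with hlt | heq | hlt
    · have h1 := hmono (show m + 1 ≤ m' by omega)
      rw [hc] at h1
      omega
    · exact heq
    · have h1 := hmono (show m' + 1 ≤ m by omega)
      rw [hc] at h1
      omega
  classical
  let P : ℤ → Letter → Prop := fun p a =>
    ∃ (m : ℤ) (i : ℕ) (h : i < (φ (u m)).length), p = c m + i ∧ a = (φ (u m)).get ⟨i, h⟩
  refine ⟨fun p => if h : ∃ a, P p a then h.choose else Letter.A, c, hc0, hc, ?_⟩
  intro m i hi
  have hex : ∃ a, P (c m + i) a := ⟨_, m, i, hi, rfl, rfl⟩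
  simp only [dif_pos hex]
  obtain ⟨m', i', hi', h1, h2⟩ := hex.choose_spec
  have hm := huniq _ _ _ _ hi hi' h1
  subst hm
  have : i = i' := by omega
  subst this
  exact h2

/-- Partial sums over the image word, inside the block `φ (u m)`. -/
lemma block_partial_sum {φ : Morph} {u v : ℤ → Letter} {c : ℤ → ℤ}
    (hv : ∀ (m : ℤ) (i : ℕ) (h : i < (φ (u m)).length), v (c m + (i : ℤ)) = (φ (u m)).get ⟨i, h⟩)
    {g : Letter → ℝ} {z : ℤ → ℝ} (hz : ∀ p, z (p + 1) = z p + g (v p)) (m : ℤ) (i : ℕ)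
    (hi : i ≤ (φ (u m)).length) :
    z (c m + i) = z (c m) + (((φ (u m)).map g).take i).sum := by
  induction i with
  | zero => simp
  | succ i ih =>
    have hlt : i < (φ (u m)).length := hi
    rw [List.sum_take_succ _ i (by simpa using hlt), ← add_assoc, ← ih hlt.le]
    push_cast
    rw [← add_assoc, hz, hv m i hlt]
    simp

lemma block_sum {φ : Morph} {u v : ℤ → Letter} {c : ℤ → ℤ}
    (hc : ∀ m : ℤ, c (m + 1) = c m + (φ (u m)).length)
    (hv : ∀ (m : ℤ) (i : ℕ) (h : i < (φ (u m)).length), v (c m + (i : ℤ)) = (φ (u m)).get ⟨i, h⟩)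
    {g : Letter → ℝ} {z : ℤ → ℝ} (hz : ∀ p, z (p + 1) = z p + g (v p)) (m : ℤ) :
    z (c (m + 1)) = z (c m) + pullWeight φ g (u m) := by
  rw [hc, block_partial_sum hv hz m _ le_rfl, pullWeight]
  congr 2
  exact List.take_of_length_le (by simp)

/-- Every position of the image word lies in some block. -/
lemma exists_block {φ : Morph} (hφ : ∀ a, φ a ≠ []) {u : ℤ → Letter} {c : ℤ → ℤ} (hc0 : c 0 = 0)
    (hc : ∀ m : ℤ, c (m + 1) = c m + (φ (u m)).length) (p : ℤ) :
    ∃ (m : ℤ) (i : ℕ), i < (φ (u m)).length ∧ p = c m + i := by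
  have hpos : ∀ m, 0 < (φ (u m)).length := fun m => List.length_pos_iff.2 (hφ _)
  induction p using Int.induction_on with
  | zero => exact ⟨0, 0, hpos 0, by simp [hc0]⟩
  | succ k ih =>
    obtain ⟨m, i, hi, h⟩ := ih
    by_cases h' : i + 1 < (φ (u m)).length
    · exact ⟨m, i + 1, h', by push_cast; omega⟩
    · exact ⟨m + 1, 0, hpos _, by rw [hc]; push_cast; omega⟩
  | pred k ih =>
    obtain ⟨m, i, hi, h⟩ := ih
    rcases i with _ | i
    · have h1 := hc (m - 1)
      have h2 := hpos (m - 1)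
      rw [sub_add_cancel] at h1
      exact ⟨m - 1, (φ (u (m - 1))).length - 1, by omega, by push_cast at *; omega⟩
    · exact ⟨m, i, by omega, by push_cast at *; omega⟩

/-! ### The infinite family of 3iet preserving morphisms -/

/-- The morphism `A ↦ A Bⁿ`, `B ↦ A Bⁿ⁺¹`, `C ↦ A C`. -/
def famMorph (n : ℕ) : Morph
  | Letter.A => Letter.A :: List.replicate n Letter.B
  | Letter.B => Letter.A :: List.replicate (n + 1) Letter.B
  | Letter.C => [Letter.A, Letter.C]

/-- The translation lengths of the interval exchange with parameters `α, β, γ`. -/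
def stepOf (α β γ : ℝ) : Letter → ℝ
  | Letter.A => β + γ
  | Letter.B => γ - α
  | Letter.C => -(α + β)

lemma IsCodedOrbit.succ {b : Bool} {α β γ : ℝ} {u : ℤ → Letter} {y : ℤ → ℝ}
    (h : IsCodedOrbit b α β γ u y) (n : ℤ) : y (n + 1) = y n + stepOf α β γ (u n) := by
  rcases h n with ⟨h, _, h'⟩ | ⟨h, _, h'⟩ | ⟨h, _, h'⟩ <;> rw [h', h] <;> rfl

lemma famMorph_ne_nil (n : ℕ) (a : Letter) : famMorph n a ≠ [] := by
  cases a <;> simp [famMorph]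

lemma sum_take_cons_replicate (g : Letter → ℝ) (N i : ℕ) (hi : i ≤ N) :
    (((Letter.A :: List.replicate N Letter.B).map g).take (i + 1)).sum
      = g Letter.A + i * g Letter.B := by
  simp [List.take_replicate, hi]

/-- The interval exchange with parameters `(α, β, γ)` is the first-return map to
`I_A = [0, α + β + γ)` of the one with parameters `(α + β + γ, nα + (n+1)β, γ)`, and the return
itineraries are the images of the letters under `famMorph n`. -/
lemma famMorph_preserves (n : ℕ) : Preserves3iet (famMorph n) := by
  refine ⟨famMorph_ne_nil n, fun u v hu huv => ?_⟩
  rw [is3ietWord_iff] at hu ⊢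
  obtain ⟨α, β, γ, hα, hβ, hγ, hli, b, y, hy⟩ := hu
  obtain ⟨c, hc0, hc, hv⟩ := huv
  have hn : (0 : ℝ) ≤ n := Nat.cast_nonneg n
  obtain ⟨β', hβ'⟩ : ∃ x : ℝ, x = n * α + (n + 1) * β := ⟨_, rfl⟩
  have hnα : 0 ≤ n * α := by positivity
  have hnβ : 0 ≤ n * β := by positivity
  refine ⟨α + β + γ, β', γ, by linarith, by linarith, hγ, ?_, b, ?_⟩
  · -- With `s = α + β` and `t = β + γ` the new pair is `((n+1)s + t, ns + t)`.
    rw [LinearIndependent.pair_iff] at hli ⊢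
    intro p q hpq
    have h := hli ((n + 1) * p + n * q) (p + q) (by
      simp only [Rat.smul_def] at hpq ⊢
      push_cast
      rw [hβ'] at hpq
      linear_combination hpq)
    obtain ⟨h1, h2⟩ := h
    have hp : p = 0 := by linear_combination h1 - n * h2
    exact ⟨hp, by linear_combination h2 - hp⟩
  · obtain ⟨z, hz0, hz⟩ := exists_increments (y 0) (fun p => stepOf (α + β + γ) β' γ (v p))
    have hzc : ∀ m, y m = z (c m) := by
      refine eq_of_increments (f := fun m => stepOf α β γ (u m)) (by rw [hc0, hz0]) hy.succ ?_
      intro m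
      rw [block_sum hc hv hz m]
      congr 1
      cases u m <;> simp [pullWeight, famMorph, stepOf, hβ'] <;> ring
    -- The orbit of the larger exchange while the block of an `A` or of a `B` is being read.
    have hrep : ∀ (m : ℤ) (i N : ℕ), famMorph n (u m) = Letter.A :: List.replicate N Letter.B →
        i < N → v (c m + (i + 1 : ℕ)) = Letter.B ∧
          z (c m + (i + 1 : ℕ)) = y m + (β' + γ) - i * (α + β) := by
      intro m i N hm hi
      constructor
      · rw [hv m (i + 1) (by rw [hm]; simp; omega)]
        simp [hm]
      · rw [block_partial_sum hv hz m (i + 1) (by rw [hm]; simp; omega), hm,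
          sum_take_cons_replicate _ _ _ hi.le, hzc]
        simp only [stepOf]
        ring
    refine ⟨z, fun p => ?_⟩
    obtain ⟨m, i, hi, rfl⟩ := exists_block (famMorph_ne_nil n) hc0 hc p
    have hstep := hz (c m + i)
    rcases i with _ | i
    · left
      have hA : v (c m + (0 : ℕ)) = Letter.A := by
        rw [hv m 0 hi]
        obtain ⟨l, hl⟩ : ∃ l, famMorph n (u m) = Letter.A :: l := by
          cases u m <;> exact ⟨_, rfl⟩
        simp [hl]
      rw [hA] at hstep
      refine ⟨hA, ?_, hstep⟩
      simp only [Nat.cast_zero, add_zero, ← hzc]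
      cases b <;> rcases hy m with ⟨_, ⟨h1, h2⟩, _⟩ | ⟨_, ⟨h1, h2⟩, _⟩ | ⟨_, ⟨h1, h2⟩, _⟩ <;>
        constructor <;> linarith
    · rcases hy m with ⟨hu, hmem, _⟩ | ⟨hu, hmem, _⟩ | ⟨hu, hmem, _⟩
      · right; left
        have hi' : i < n := by simpa [hu, famMorph] using hi
        obtain ⟨hB, hzv⟩ := hrep m i n (by rw [hu]; rfl) hi'
        have hin : ((i : ℝ) + 1) * (α + β) ≤ n * (α + β) :=
          mul_le_mul_of_nonneg_right (by exact_mod_cast hi') (by linarith)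
        have hi0 : 0 ≤ (i : ℝ) * (α + β) := by positivity
        rw [hB] at hstep
        refine ⟨hB, ?_, hstep⟩
        rw [hzv]
        cases b <;> obtain ⟨h1, h2⟩ := hmem <;> constructor <;> nlinarith
      · right; left
        have hi' : i < n + 1 := by simpa [hu, famMorph] using hi
        obtain ⟨hB, hzv⟩ := hrep m i (n + 1) (by rw [hu]; rfl) hi'
        have hin : (i : ℝ) * (α + β) ≤ n * (α + β) :=
          mul_le_mul_of_nonneg_right (by exact_mod_cast Nat.lt_succ_iff.1 hi') (by linarith)
        have hi0 : 0 ≤ (i : ℝ) * (α + β) := by positivity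
        rw [hB] at hstep
        refine ⟨hB, ?_, hstep⟩
        rw [hzv]
        cases b <;> obtain ⟨h1, h2⟩ := hmem <;> constructor <;> nlinarith
      · right; right
        have hi' : i = 0 := by
          have : i + 1 < 2 := by simpa [hu, famMorph] using hi
          omega
        subst hi'
        have hC : v (c m + (0 + 1 : ℕ)) = Letter.C := by
          rw [hv m (0 + 1) hi]
          simp [hu, famMorph]
        have hzv : z (c m + (0 + 1 : ℕ)) = y m + (β' + γ) := by
          rw [block_partial_sum hv hz m (0 + 1) hi.le, hzc]
          simp [hu, famMorph, stepOf]
        rw [hC] at hstep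
        refine ⟨hC, ?_, hstep⟩
        rw [hzv]
        cases b <;> obtain ⟨h1, h2⟩ := hmem <;> constructor <;> linarith

/-! ### Weights with bounded partial sums -/

/-- The partial sums of the weight `g` along the word `u` stay in an interval of length `K`. -/
def BoundedSums (u : ℤ → Letter) (g : Letter → ℝ) (K : ℝ) : Prop :=
  ∃ z : ℤ → ℝ, (∀ m, z (m + 1) = z m + g (u m)) ∧ ∀ m, 0 ≤ z m ∧ z m ≤ K

lemma BoundedSums.pull {φ : Morph} {u v : ℤ → Letter} {g : Letter → ℝ} {K : ℝ}
    (h : BoundedSums v g K) (huv : IsImageWord φ u v) : BoundedSums u (pullWeight φ g) K := by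
  obtain ⟨z, hz, hK⟩ := h
  obtain ⟨c, _, hc, hv⟩ := huv
  exact ⟨fun m => z (c m), fun m => block_sum hc hv hz m, fun m => hK _⟩

/-- The weight `A ↦ t`, `B ↦ t - s`, `C ↦ -s`. -/
def slopeWeight (s t : ℝ) : Letter → ℝ
  | Letter.A => t
  | Letter.B => t - s
  | Letter.C => -s

lemma Is3ietWord.boundedSums {v : ℤ → Letter} (hv : Is3ietWord v) :
    ∃ s t : ℝ, 0 < s ∧ 0 < t ∧ BoundedSums v (slopeWeight s t) (s + t) := by
  rw [is3ietWord_iff] at hv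
  obtain ⟨α, β, γ, hα, hβ, hγ, -, b, y, hy⟩ := hv
  refine ⟨α + β, β + γ, by linarith, by linarith, y, fun m => ?_, fun m => ?_⟩
  · rw [hy.succ]
    cases v m <;> simp only [stepOf, slopeWeight] <;> ring
  · cases b <;> rcases hy m with ⟨_, ⟨h1, h2⟩, _⟩ | ⟨_, ⟨h1, h2⟩, _⟩ | ⟨_, ⟨h1, h2⟩, _⟩ <;>
      constructor <;> linarith

/-- For every `k` some 3iet word contains the factor `(AC)ᵏBᵏ`. -/
lemma exists_word_AC_pow_B_pow (k : ℕ) :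
    ∃ u, Is3ietWord u ∧
      (∀ j : ℕ, j < k → u ((2 * j : ℕ) : ℤ) = Letter.A ∧ u ((2 * j + 1 : ℕ) : ℤ) = Letter.C) ∧
      ∀ j : ℕ, j < k → u ((2 * k + j : ℕ) : ℤ) = Letter.B := by
  -- With parameters `(1, 1, 1 + ε)` the blocks `AC` and `B` both translate by the small `ε`.
  obtain ⟨ε, hεdef⟩ : ∃ x : ℝ, x = √2 / (2 * (k + 1) : ℕ) := ⟨_, rfl⟩
  have hirr : Irrational ε := by
    rw [hεdef]
    exact irrational_sqrt_two.div_natCast (by positivity)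
  have hε : 0 < ε := by rw [hεdef]; positivity
  have hkε : (k + 1) * ε < 1 := by
    have h2 : √2 < 2 := by
      rw [Real.sqrt_lt' (by norm_num)]
      norm_num
    rw [hεdef]
    push_cast
    field_simp
    linarith
  have hk : (k : ℝ) * ε < 1 := by nlinarith
  have hk0 : 0 ≤ (k : ℝ) * ε := by positivity
  have hs : ∀ j : ℕ, j < k → ((j : ℝ) + 1) * ε ≤ k * ε := fun j hj =>
    mul_le_mul_of_nonneg_right (by exact_mod_cast hj) hε.le
  have hj0 : ∀ j : ℕ, 0 ≤ (j : ℝ) * ε := fun j => by positivity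
  let T := Tleft 1 1 (1 + ε)
  let x₀ : ℝ := 1 - k * ε
  have hB : ∀ x, 1 ≤ x → x < 2 → T x = x + ε := by
    intro x h1 h2
    simp only [T, Tleft]
    split_ifs <;> linarith
  have hA : ∀ x, x < 1 → T x = x + 2 + ε := by
    intro x h1
    simp only [T, Tleft]
    split_ifs
    linarith
  have hC : ∀ x, 2 ≤ x → T x = x - 2 := by
    intro x h1
    simp only [T, Tleft]
    split_ifs <;> linarith
  have h1 : ∀ j : ℕ, j ≤ k → T^[2 * j] x₀ = x₀ + j * ε := by
    intro j
    induction j with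
    | zero => simp
    | succ j ih =>
      intro hj
      have := hs j hj
      have := hj0 j
      rw [show 2 * (j + 1) = 2 * j + 1 + 1 by ring, Function.iterate_succ_apply',
        Function.iterate_succ_apply', ih (by omega), hA (x₀ + j * ε) (by simp only [x₀]; linarith),
        hC (x₀ + j * ε + 2 + ε) (by simp only [x₀]; linarith)]
      push_cast
      ring
  have h2 : ∀ j : ℕ, j < k → T^[2 * k + j] x₀ = 1 + j * ε := by
    intro j
    induction j with
    | zero =>
      intro _
      rw [add_zero, h1 k le_rfl]
      simp [x₀]
    | succ j ih =>
      intro hj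
      have := hs j (by omega)
      have := hj0 j
      rw [← add_assoc, Function.iterate_succ_apply', ih (by omega),
        hB _ (by linarith) (by linarith)]
      push_cast
      ring
  refine ⟨uLeft 1 1 (1 + ε) x₀, ⟨1, 1, 1 + ε, x₀, one_pos, one_pos, by linarith, ?_,
    Or.inl ⟨⟨by simp only [x₀]; linarith, by simp only [x₀]; linarith⟩, rfl⟩⟩, ?_, ?_⟩
  · rw [LinearIndependent.pair_iff]
    intro p q hpq
    simp only [Rat.smul_def] at hpq
    have hq : q = 0 := by
      by_contra hq
      refine hirr ⟨-(2 * p + 2 * q) / q, ?_⟩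
      have hq' : (q : ℝ) ≠ 0 := by exact_mod_cast hq
      push_cast
      field_simp
      linarith
    subst hq
    have hp : (p : ℝ) = 0 := by
      push_cast at hpq
      linarith
    exact ⟨by exact_mod_cast hp, rfl⟩
  · intro j hj
    have := hs j hj
    have := hj0 j
    constructor
    · change codeLeft 1 1 (T^[2 * j] x₀) = _
      rw [h1 j hj.le, codeLeft, if_pos (by simp only [x₀]; linarith)]
    · change codeLeft 1 1 (T^[2 * j + 1] x₀) = _
      rw [Function.iterate_succ_apply', h1 j hj.le, hA _ (by simp only [x₀]; linarith), codeLeft,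
        if_neg (by simp only [x₀]; linarith), if_neg (by simp only [x₀]; linarith)]
  · intro j hj
    have := hs j hj
    have := hj0 j
    change codeLeft 1 1 (T^[2 * k + j] x₀) = _
    rw [h2 j hj, codeLeft, if_neg (by linarith), if_pos (by linarith)]

lemma exists_word_weight_bounds (k : ℕ) :
    ∃ u, Is3ietWord u ∧ ∀ g K, BoundedSums u g K →
      |k * g Letter.B| ≤ K ∧ |k * (g Letter.A + g Letter.C)| ≤ K := by
  obtain ⟨u, hu, hAC, hB⟩ := exists_word_AC_pow_B_pow k
  refine ⟨u, hu, fun g K ⟨z, hz, hK⟩ => ?_⟩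
  have h1 : ∀ j : ℕ, j ≤ k → z ((2 * j : ℕ) : ℤ) = z 0 + j * (g Letter.A + g Letter.C) := by
    intro j
    induction j with
    | zero => simp
    | succ j ih =>
      intro hj
      obtain ⟨ha, hc⟩ := hAC j hj
      have e1 := hz ((2 * j : ℕ) : ℤ)
      have e2 := hz ((2 * j + 1 : ℕ) : ℤ)
      rw [ha, ih (by omega)] at e1
      rw [hc] at e2
      have e3 : ((2 * j : ℕ) : ℤ) + 1 = ((2 * j + 1 : ℕ) : ℤ) := by push_cast; ring
      have e4 : ((2 * j + 1 : ℕ) : ℤ) + 1 = ((2 * (j + 1) : ℕ) : ℤ) := by push_cast; ring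
      rw [e3] at e1
      rw [e4, e1] at e2
      rw [e2]
      push_cast
      ring
  have h2 : ∀ j : ℕ, j ≤ k → z ((2 * k + j : ℕ) : ℤ) = z ((2 * k : ℕ) : ℤ) + j * g Letter.B := by
    intro j
    induction j with
    | zero => simp
    | succ j ih =>
      intro hj
      have e1 := hz ((2 * k + j : ℕ) : ℤ)
      rw [hB j hj, ih (by omega)] at e1
      have e3 : ((2 * k + j : ℕ) : ℤ) + 1 = ((2 * k + (j + 1) : ℕ) : ℤ) := by push_cast; ring
      rw [e3] at e1
      rw [e1]
      push_cast
      ring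
  have e1 := h1 k le_rfl
  have e2 := h2 k le_rfl
  have b0 := hK 0
  have b1 := hK ((2 * k : ℕ) : ℤ)
  have b2 := hK ((2 * k + k : ℕ) : ℤ)
  constructor <;> rw [abs_le] <;> constructor <;> linarith

/-- If the nonnegative integer vectors `(x, y)` and `(x', y')` are, for every `k`, both within
`O(1/k)` of a common line of positive slope, then they are parallel. -/
lemma parallel_of_bounds {x y x' y' : ℤ} (hx : 0 ≤ x) (hy : 0 ≤ y) (hx' : 0 ≤ x') (hy' : 0 ≤ y')
    (h : ∀ k : ℕ, ∃ s t : ℝ, 0 < s ∧ 0 < t ∧ |k * (t * x - s * y)| ≤ s + t ∧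
      |k * (t * x' - s * y')| ≤ s + t) : x * y' = x' * y := by
  obtain ⟨k, hk⟩ : ∃ k : ℕ, (k : ℤ) = x + y + x' + y' + 1 :=
    ⟨(x + y + x' + y' + 1).toNat, by omega⟩
  obtain ⟨s, t, hs, ht, h1, h2⟩ := h k
  have hkR : (k : ℝ) = x + y + x' + y' + 1 := by exact_mod_cast hk
  have rx : (0 : ℝ) ≤ x := by exact_mod_cast hx
  have ry : (0 : ℝ) ≤ y := by exact_mod_cast hy
  have rx' : (0 : ℝ) ≤ x' := by exact_mod_cast hx'
  have ry' : (0 : ℝ) ≤ y' := by exact_mod_cast hy'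
  rw [abs_le] at h1 h2
  have hst : 0 < s + t := by linarith
  have key : ∀ d : ℝ, d = x * y' - x' * y → k * d ≤ x + y + x' + y' ∧ -(x + y + x' + y') ≤ k * d := by
    rintro d rfl
    have a1 := mul_le_mul_of_nonneg_right h1.1 ry'
    have a2 := mul_le_mul_of_nonneg_right h1.2 ry'
    have a3 := mul_le_mul_of_nonneg_right h2.1 ry
    have a4 := mul_le_mul_of_nonneg_right h2.2 ry
    have a5 := mul_le_mul_of_nonneg_right h1.1 rx'
    have a6 := mul_le_mul_of_nonneg_right h1.2 rx'
    have a7 := mul_le_mul_of_nonneg_right h2.1 rx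
    have a8 := mul_le_mul_of_nonneg_right h2.2 rx
    constructor
    · refine le_of_mul_le_mul_right ?_ hst
      linarith
    · refine le_of_mul_le_mul_right ?_ hst
      linarith
  obtain ⟨k1, k2⟩ := key _ rfl
  have i1 : (k : ℤ) * (x * y' - x' * y) < k := by
    have : (k : ℝ) * (x * y' - x' * y) < k := by linarith
    exact_mod_cast this
  have i2 : -(k : ℤ) < (k : ℤ) * (x * y' - x' * y) := by
    have : -(k : ℝ) < (k : ℝ) * (x * y' - x' * y) := by linarith
    exact_mod_cast this
  have hkpos : (0 : ℤ) < k := by omega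
  have j1 : x * y' - x' * y < 1 := by
    by_contra hcon
    nlinarith
  have j2 : -1 < x * y' - x' * y := by
    by_contra hcon
    nlinarith
  linarith

/-! ### The necessary condition on incidence matrices -/

lemma map_slopeWeight_sum (s t : ℝ) (l : List Letter) :
    (l.map (slopeWeight s t)).sum =
      t * ((l.count Letter.A : ℤ) + (l.count Letter.B : ℤ) : ℤ)
        - s * ((l.count Letter.B : ℤ) + (l.count Letter.C : ℤ) : ℤ) := by
  induction l with
  | nil => simp
  | cons a l ih =>
    rw [List.map_cons, List.sum_cons, ih]
    cases a <;> simp [slopeWeight] <;> ring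

/-- Nonnegative matrices with left eigenvector `(1, -1, 1)`. -/
def Good (M : Matrix (Fin 3) (Fin 3) ℤ) : Prop :=
  (∀ i j, 0 ≤ M i j) ∧ M 0 0 - M 1 0 + M 2 0 = -(M 0 1 - M 1 1 + M 2 1) ∧
    M 0 2 - M 1 2 + M 2 2 = -(M 0 1 - M 1 1 + M 2 1)

lemma pullWeight_slopeWeight (φ : Morph) (s t : ℝ) (i : Fin 3) :
    pullWeight φ (slopeWeight s t) (ltr i)
      = t * (incMat φ i 0 + incMat φ i 1 : ℤ) - s * (incMat φ i 1 + incMat φ i 2 : ℤ) := by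
  rw [pullWeight, map_slopeWeight_sum]
  rfl

/-- Let `X` and `Y` be the sums of the first two and of the last two columns of the incidence
matrix. Boundedness of the sums along images of words containing `(AC)ᵏBᵏ`, and along images of
images of such words under `famMorph 0`, forces two linear relations on `X × Y`, which together
say that `X × Y` is a multiple of `(1, -1, 1)`. -/
lemma good_of_mem {M : Matrix (Fin 3) (Fin 3) ℤ} (hM : M ∈ RPhi3iet) : Good M := by
  obtain ⟨φ, ⟨-, hφ⟩, rfl, hdet⟩ := hM
  have hpw := pullWeight_slopeWeight φ
  have hnn : ∀ i j, 0 ≤ incMat φ i j := fun i j => by simp [incMat]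
  generalize incMat φ = M at *
  have hw : ∀ s t, pullWeight φ (slopeWeight s t) Letter.A
        = t * (M 0 0 + M 0 1 : ℤ) - s * (M 0 1 + M 0 2 : ℤ) ∧
      pullWeight φ (slopeWeight s t) Letter.B
        = t * (M 1 0 + M 1 1 : ℤ) - s * (M 1 1 + M 1 2 : ℤ) ∧
      pullWeight φ (slopeWeight s t) Letter.C
        = t * (M 2 0 + M 2 1 : ℤ) - s * (M 2 1 + M 2 2 : ℤ) :=
    fun s t => ⟨hpw s t 0, hpw s t 1, hpw s t 2⟩
  have p00 := hnn 0 0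
  have p01 := hnn 0 1
  have p02 := hnn 0 2
  have p10 := hnn 1 0
  have p11 := hnn 1 1
  have p12 := hnn 1 2
  have p20 := hnn 2 0
  have p21 := hnn 2 1
  have p22 := hnn 2 2
  have rel1 : (M 1 0 + M 1 1) * ((M 0 1 + M 0 2) + (M 2 1 + M 2 2))
      = ((M 0 0 + M 0 1) + (M 2 0 + M 2 1)) * (M 1 1 + M 1 2) := by
    apply parallel_of_bounds (by positivity) (by positivity) (by positivity) (by positivity)
    intro k
    obtain ⟨u, hu, hub⟩ := exists_word_weight_bounds k
    obtain ⟨v, huv⟩ := exists_imageWord φ u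
    obtain ⟨s, t, hs, ht, hb⟩ := (hφ u v hu huv).boundedSums
    obtain ⟨h1, h2⟩ := hub _ _ (hb.pull huv)
    obtain ⟨wA, wB, wC⟩ := hw s t
    rw [wB] at h1
    rw [wA, wC] at h2
    refine ⟨s, t, hs, ht, h1, ?_⟩
    convert h2 using 2
    push_cast
    ring
  have rel2 : ((M 0 0 + M 0 1) + (M 1 0 + M 1 1))
        * (2 * (M 0 1 + M 0 2) + (M 2 1 + M 2 2))
      = (2 * (M 0 0 + M 0 1) + (M 2 0 + M 2 1)) * ((M 0 1 + M 0 2) + (M 1 1 + M 1 2)) := by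
    apply parallel_of_bounds (by positivity) (by positivity) (by positivity) (by positivity)
    intro k
    obtain ⟨u, hu, hub⟩ := exists_word_weight_bounds k
    obtain ⟨w, huw⟩ := exists_imageWord (famMorph 0) u
    have hw3 := (famMorph_preserves 0).2 u w hu huw
    obtain ⟨v, hwv⟩ := exists_imageWord φ w
    obtain ⟨s, t, hs, ht, hb⟩ := (hφ w v hw3 hwv).boundedSums
    obtain ⟨h1, h2⟩ := hub _ _ ((hb.pull hwv).pull huw)
    obtain ⟨wA, wB, wC⟩ := hw s t
    have qA : pullWeight (famMorph 0) (pullWeight φ (slopeWeight s t)) Letter.A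
        = pullWeight φ (slopeWeight s t) Letter.A := by
      simp [pullWeight, famMorph]
    have qB : pullWeight (famMorph 0) (pullWeight φ (slopeWeight s t)) Letter.B
        = pullWeight φ (slopeWeight s t) Letter.A + pullWeight φ (slopeWeight s t) Letter.B := by
      simp [pullWeight, famMorph]
    have qC : pullWeight (famMorph 0) (pullWeight φ (slopeWeight s t)) Letter.C
        = pullWeight φ (slopeWeight s t) Letter.A + pullWeight φ (slopeWeight s t) Letter.C := by
      simp [pullWeight, famMorph]
    rw [qB, wA, wB] at h1
    rw [qA, qC, wA, wC] at h2
    refine ⟨s, t, hs, ht, ?_, ?_⟩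
    · convert h1 using 2
      push_cast
      ring
    · convert h2 using 2
      push_cast
      ring
  have hdet' := Matrix.det_fin_three M
  refine ⟨hnn, ?_⟩
  generalize M 0 0 = a at *
  generalize M 0 1 = b at *
  generalize M 0 2 = c at *
  generalize M 1 0 = d at *
  generalize M 1 1 = e at *
  generalize M 1 2 = f at *
  generalize M 2 0 = g at *
  generalize M 2 1 = h at *
  generalize M 2 2 = i at *
  -- `N` is the first coordinate of `X × Y`.
  obtain ⟨N, hN⟩ : ∃ N : ℤ, N = (d + e) * (h + i) - (g + h) * (e + f) := ⟨_, rfl⟩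
  have n3 : (a + b) * (e + f) - (d + e) * (b + c) = N := by linear_combination -hN - rel1
  have n2 : (g + h) * (b + c) - (a + b) * (h + i) = -N := by
    linear_combination -rel2 - hN - 2 * n3
  have hN0 : N ≠ 0 := by
    rintro rfl
    apply hdet
    rw [hdet']
    linear_combination b * hN - e * n2 - h * n3
  have hX : N * ((a + b) - (d + e) + (g + h)) = 0 := by
    linear_combination (a + b) * hN - (d + e) * n2 - (g + h) * n3
  have hY : N * ((b + c) - (e + f) + (h + i)) = 0 := by
    linear_combination (b + c) * hN - (e + f) * n2 - (h + i) * n3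
  have hX' := (mul_eq_zero.1 hX).resolve_left hN0
  have hY' := (mul_eq_zero.1 hY).resolve_left hN0
  constructor <;> linarith

/-! ### Irreducibility of the matrices of the family -/

/-- The incidence matrix of `famMorph n`. -/
def famMat (n : ℕ) : Matrix (Fin 3) (Fin 3) ℤ := !![1, n, 0; 1, n + 1, 0; 1, 0, 1]

/-- The matrix of the exchange of the letters `A` and `C`. -/
def swapMat : Matrix (Fin 3) (Fin 3) ℤ := !![0, 0, 1; 0, 1, 0; 1, 0, 0]

lemma famMat_det (n : ℕ) : (famMat n).det = 1 := by
  simp [famMat, Matrix.det_fin_three]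

lemma famMat_mem (n : ℕ) : famMat n ∈ RPhi3iet := by
  refine ⟨famMorph n, famMorph_preserves n, ?_, by simp [famMat_det]⟩
  ext i j
  fin_cases i <;> fin_cases j <;>
    simp [incMat, famMorph, famMat, ltr, List.count_replicate]

lemma swapMat_mul_self : swapMat * swapMat = 1 := by
  decide

/-- The incidence matrices of the two invertible morphisms. -/
def IsTriv (M : Matrix (Fin 3) (Fin 3) ℤ) : Prop := M = 1 ∨ M = swapMat

lemma IsTriv.mul {U V : Matrix (Fin 3) (Fin 3) ℤ} (hU : IsTriv U) (hV : IsTriv V) :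
    IsTriv (U * V) := by
  rcases hU with rfl | rfl <;> rcases hV with rfl | rfl <;> simp [IsTriv, swapMat_mul_self]

lemma IsTriv.mul_self {U : Matrix (Fin 3) (Fin 3) ℤ} (hU : IsTriv U) : U * U = 1 := by
  rcases hU with rfl | rfl <;> simp [swapMat_mul_self]

lemma IsTriv.good {U : Matrix (Fin 3) (Fin 3) ℤ} (hU : IsTriv U) : Good U := by
  rcases hU with rfl | rfl
  · exact ⟨fun i j => by fin_cases i <;> fin_cases j <;> decide, by decide, by decide⟩
  · exact ⟨fun i j => by fin_cases i <;> fin_cases j <;> decide, by decide, by decide⟩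

lemma Good.mul {M N : Matrix (Fin 3) (Fin 3) ℤ} (hM : Good M) (hN : Good N) : Good (M * N) := by
  obtain ⟨m0, m1, m2⟩ := hM
  obtain ⟨n0, n1, n2⟩ := hN
  refine ⟨fun i j => ?_, ?_, ?_⟩
  · rw [Matrix.mul_apply]
    exact Finset.sum_nonneg fun k _ => mul_nonneg (m0 i k) (n0 k j)
  · simp only [Matrix.mul_apply, Fin.sum_univ_three]
    linear_combination (N 0 0 + N 0 1) * m1 + (N 2 0 + N 2 1) * m2
      - (M 0 1 - M 1 1 + M 2 1) * n1
  · simp only [Matrix.mul_apply, Fin.sum_univ_three]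
    linear_combination (N 0 1 + N 0 2) * m1 + (N 2 1 + N 2 2) * m2
      - (M 0 1 - M 1 1 + M 2 1) * n2

/-- For a good matrix the map induced on `ℤ²` and the eigenvalue of `(1, -1, 1)` are units as soon
as the determinant is. -/
lemma Good.units {M : Matrix (Fin 3) (Fin 3) ℤ} (hM : Good M) (hdet : IsUnit M.det) :
    IsUnit (M 0 0 - M 1 0 + M 2 0) ∧
      IsUnit ((M 0 0 + M 0 1) * (M 2 1 + M 2 2) - (M 0 1 + M 0 2) * (M 2 0 + M 2 1)) := by
  obtain ⟨-, h1, h2⟩ := hM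
  have h : M.det = (M 0 0 - M 1 0 + M 2 0) *
      ((M 0 0 + M 0 1) * (M 2 1 + M 2 2) - (M 0 1 + M 0 2) * (M 2 0 + M 2 1)) := by
    rw [Matrix.det_fin_three]
    have e0 : M 1 0 = M 0 0 + M 2 0 + (M 0 1 - M 1 1 + M 2 1) := by linarith
    have e2 : M 1 2 = M 0 2 + M 2 2 + (M 0 1 - M 1 1 + M 2 1) := by linarith
    rw [e0, e2]
    ring
  rw [h] at hdet
  exact ⟨isUnit_of_mul_isUnit_left hdet, isUnit_of_mul_isUnit_right hdet⟩

/-- A good matrix inducing the identity on `ℤ²` is the identity. -/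
lemma Good.eq_one {M : Matrix (Fin 3) (Fin 3) ℤ} (hM : Good M) (hdet : IsUnit M.det)
    (h1 : M 0 0 + M 0 1 = 1) (h2 : M 0 1 + M 0 2 = 0) (h3 : M 2 0 + M 2 1 = 0)
    (h4 : M 2 1 + M 2 2 = 1) : M = 1 := by
  obtain ⟨hl, -⟩ := hM.units hdet
  obtain ⟨hn, g1, g2⟩ := hM
  have p01 := hn 0 1
  have p02 := hn 0 2
  have p10 := hn 1 0
  have p20 := hn 2 0
  have p21 := hn 2 1
  have p11 := hn 1 1
  rw [Int.isUnit_iff] at hl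
  have e00 : M 0 0 = 1 := by omega
  have e01 : M 0 1 = 0 := by omega
  have e02 : M 0 2 = 0 := by omega
  have e10 : M 1 0 = 0 := by omega
  have e11 : M 1 1 = 1 := by omega
  have e12 : M 1 2 = 0 := by omega
  have e20 : M 2 0 = 0 := by omega
  have e21 : M 2 1 = 0 := by omega
  have e22 : M 2 2 = 1 := by omega
  ext i j
  fin_cases i <;> fin_cases j <;> simp [e00, e01, e02, e10, e11, e12, e20, e21, e22]

lemma isTriv_one : IsTriv 1 := Or.inl rfl

lemma isTriv_swapMat : IsTriv swapMat := Or.inr rfl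

lemma swapMat_det : swapMat.det = -1 := by
  decide

lemma Good.eq_swap {M : Matrix (Fin 3) (Fin 3) ℤ} (hM : Good M) (hdet : IsUnit M.det)
    (h1 : M 0 0 + M 0 1 = 0) (h2 : M 0 1 + M 0 2 = 1) (h3 : M 2 0 + M 2 1 = 1)
    (h4 : M 2 1 + M 2 2 = 0) : M = swapMat := by
  have hs : ∀ j, (swapMat * M) 0 j = M 2 j ∧ (swapMat * M) 2 j = M 0 j := by
    intro j
    simp [swapMat, Matrix.mul_apply, Fin.sum_univ_three]
  have h : swapMat * M = 1 := by
    refine (isTriv_swapMat.good.mul hM).eq_one ?_ ?_ ?_ ?_ ?_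
    · rw [Matrix.det_mul, swapMat_det]
      simpa using hdet
    · rw [(hs 0).1, (hs 1).1, h3]
    · rw [(hs 1).1, (hs 2).1, h4]
    · rw [(hs 0).2, (hs 1).2, h1]
    · rw [(hs 1).2, (hs 2).2, h2]
  calc M = swapMat * (swapMat * M) := by rw [← mul_assoc, swapMat_mul_self, one_mul]
    _ = swapMat := by rw [h, mul_one]

/-- The case of a factorization of `famMat n` in which the left factor induces an upper
unitriangular matrix on `ℤ²`. -/
lemma left_eq_one {n : ℕ} {X Y : Matrix (Fin 3) (Fin 3) ℤ} (hX : Good X) (hY : Good Y)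
    (hXd : IsUnit X.det) (h : X * Y = famMat n)
    (hc : X 2 0 + X 2 1 = 0) : X = 1 := by
  obtain ⟨hlX, hdX⟩ := hX.units hXd
  obtain ⟨hx, x1, x2⟩ := id hX
  obtain ⟨hy, y1, y2⟩ := id hY
  have E : ∀ i j, X i 0 * Y 0 j + X i 1 * Y 1 j + X i 2 * Y 2 j = famMat n i j := by
    intro i j
    rw [← h, Matrix.mul_apply, Fin.sum_univ_three]
  have E00 : _ = (1 : ℤ) := E 0 0
  have E01 : _ = (n : ℤ) := E 0 1
  have E02 : _ = (0 : ℤ) := E 0 2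
  have E10 : _ = (1 : ℤ) := E 1 0
  have E20 : _ = (1 : ℤ) := E 2 0
  have E21 : _ = (0 : ℤ) := E 2 1
  have E22 : _ = (1 : ℤ) := E 2 2
  have p20 := hx 2 0
  have p21 := hx 2 1
  have p22 := hx 2 2
  have p00 := hx 0 0
  have p01 := hx 0 1
  have p02 := hx 0 2
  have p10 := hx 1 0
  have p11 := hx 1 1
  have q02 := hy 0 2
  have q12 := hy 1 2
  have q00 := hy 0 0
  have q10 := hy 1 0
  have e20 : X 2 0 = 0 := by omega
  have e21 : X 2 1 = 0 := by omega
  simp only [e20, e21, zero_mul, zero_add, mul_zero, sub_zero, add_zero] at E20 E21 E22 hdX hlX x1 x2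
  have hu := Int.isUnit_iff.1 (isUnit_of_mul_isUnit_right hdX)
  have hu' := Int.isUnit_iff.1 (isUnit_of_mul_isUnit_left hdX)
  have e22 : X 2 2 = 1 := by omega
  rw [e22, one_mul] at E20 E21 E22
  rw [E20] at E00 E10 y1
  rw [E21] at E01 y1 y2
  rw [E22] at E02 y2
  rw [Int.isUnit_iff] at hlX
  have ha : (X 0 0 = 1 ∧ X 0 1 = 0) ∨ (X 0 0 = 0 ∧ X 0 1 = 1) := by omega
  rcases ha with ⟨e00, e01⟩ | ⟨e00, e01⟩
  · rw [e00, e01] at E02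
    exact hX.eq_one hXd (by omega) (by omega) (by omega) (by omega)
  · -- Here the second row of `X` is `(1, 0, 2)`, too large for the entry `1` of the product.
    exfalso
    rw [e00, e01] at E00 E01 E02
    have e10 : X 1 0 = 1 := by omega
    have e11 : X 1 1 = 0 := by omega
    have e12 : X 1 2 = 2 := by omega
    rw [e10, e11, e12] at E10
    omega

lemma famMat_irreducible_aux {n : ℕ} {X Y : Matrix (Fin 3) (Fin 3) ℤ} (hX : Good X) (hY : Good Y)
    (hXd : IsUnit X.det) (hYd : IsUnit Y.det) (h : X * Y = famMat n) : IsTriv X ∨ IsTriv Y := by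
  obtain ⟨hlX, hdX⟩ := hX.units hXd
  obtain ⟨hlY, hdY⟩ := hY.units hYd
  obtain ⟨hx, x1, x2⟩ := id hX
  obtain ⟨hy, y1, y2⟩ := id hY
  have E : ∀ i j, X i 0 * Y 0 j + X i 1 * Y 1 j + X i 2 * Y 2 j = famMat n i j := by
    intro i j
    rw [← h, Matrix.mul_apply, Fin.sum_univ_three]
  have E20 : _ = (1 : ℤ) := E 2 0
  have E21 : _ = (0 : ℤ) := E 2 1
  have E22 : _ = (1 : ℤ) := E 2 2
  by_cases hc : X 2 0 + X 2 1 = 0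
  · exact Or.inl (Or.inl (left_eq_one hX hY hXd h hc))
  by_cases hd : X 2 1 + X 2 2 = 0
  · -- Exchanging the letters between the two factors reduces to the previous case.
    left; right
    have hW := isTriv_swapMat
    have h1 : X * swapMat = 1 := by
      refine left_eq_one (n := n) (hX.mul hW.good) (hW.good.mul hY) ?_ ?_ ?_
      · rw [Matrix.det_mul, swapMat_det]
        simpa using hXd
      · rw [mul_assoc, ← mul_assoc swapMat, swapMat_mul_self, one_mul, h]
      · simp [swapMat, Matrix.mul_apply, Fin.sum_univ_three]
        omega
    calc X = X * swapMat * swapMat := by rw [mul_assoc, swapMat_mul_self, mul_one]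
      _ = swapMat := by rw [h1, one_mul]
  right
  -- Both entries of the last row of the matrix induced by `X` are positive, which forces the
  -- matrix induced by `Y` to be a permutation matrix.
  have hc' : 1 ≤ X 2 0 + X 2 1 := by
    have := hx 2 0
    have := hx 2 1
    omega
  have hd' : 1 ≤ X 2 1 + X 2 2 := by
    have := hx 2 2
    have := hx 2 1
    omega
  have F1 : (X 2 0 + X 2 1) * (Y 0 0 + Y 0 1) + (X 2 1 + X 2 2) * (Y 2 0 + Y 2 1) = 1 := by
    linear_combination E20 + E21 + X 2 1 * y1
  have F2 : (X 2 0 + X 2 1) * (Y 0 1 + Y 0 2) + (X 2 1 + X 2 2) * (Y 2 1 + Y 2 2) = 1 := by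
    linear_combination E21 + E22 + X 2 1 * y2
  have hp : 0 ≤ Y 0 0 + Y 0 1 := add_nonneg (hy _ _) (hy _ _)
  have hq : 0 ≤ Y 0 1 + Y 0 2 := add_nonneg (hy _ _) (hy _ _)
  have hr : 0 ≤ Y 2 0 + Y 2 1 := add_nonneg (hy _ _) (hy _ _)
  have hs : 0 ≤ Y 2 1 + Y 2 2 := add_nonneg (hy _ _) (hy _ _)
  have key : ∀ c d p r : ℤ, 1 ≤ c → 1 ≤ d → 0 ≤ p → 0 ≤ r → c * p + d * r = 1 →
      (p = 1 ∧ r = 0) ∨ (p = 0 ∧ r = 1) := by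
    intro c d p r hc hd hp hr h
    have h1 : p ≤ c * p := le_mul_of_one_le_left hp hc
    have h2 : r ≤ d * r := le_mul_of_one_le_left hr hd
    have h3 : ¬ (p = 0 ∧ r = 0) := by
      rintro ⟨rfl, rfl⟩
      simp at h
    omega
  rcases key _ _ _ _ hc' hd' hp hr F1 with ⟨k1, k2⟩ | ⟨k1, k2⟩ <;>
    rcases key _ _ _ _ hc' hd' hq hs F2 with ⟨k3, k4⟩ | ⟨k3, k4⟩
  · rw [k1, k2, k3, k4] at hdY
    simp at hdY
  · exact Or.inl (hY.eq_one hYd k1 k3 k2 k4)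
  · exact Or.inr (hY.eq_swap hYd k1 k3 k2 k4)
  · rw [k1, k2, k3, k4] at hdY
    simp at hdY

/-- `M` agrees with `famMat n` up to exchanging the letters `A` and `C` in rows or columns. -/
def IsFam (n : ℕ) (M : Matrix (Fin 3) (Fin 3) ℤ) : Prop :=
  ∃ U V, IsTriv U ∧ IsTriv V ∧ M = U * famMat n * V

lemma IsTriv.isUnit_det {U : Matrix (Fin 3) (Fin 3) ℤ} (hU : IsTriv U) : IsUnit U.det := by
  rcases hU with rfl | rfl
  · simp
  · rw [swapMat_det]
    simp

lemma IsTriv.of_mul_left {U X : Matrix (Fin 3) (Fin 3) ℤ} (hU : IsTriv U) (h : IsTriv (U * X)) :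
    IsTriv X := by
  have := hU.mul h
  rwa [← mul_assoc, hU.mul_self, one_mul] at this

lemma IsTriv.of_mul_right {U X : Matrix (Fin 3) (Fin 3) ℤ} (hU : IsTriv U) (h : IsTriv (X * U)) :
    IsTriv X := by
  have := h.mul hU
  rwa [mul_assoc, hU.mul_self, mul_one] at this

lemma IsFam.isUnit_det {n : ℕ} {M : Matrix (Fin 3) (Fin 3) ℤ} (h : IsFam n M) : IsUnit M.det := by
  obtain ⟨U, V, hU, hV, rfl⟩ := h
  rw [Matrix.det_mul, Matrix.det_mul, famMat_det, mul_one]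
  exact hU.isUnit_det.mul hV.isUnit_det

lemma IsFam.irreducible {n : ℕ} {X Y : Matrix (Fin 3) (Fin 3) ℤ} (hX : Good X) (hY : Good Y)
    (h : IsFam n (X * Y)) : IsTriv X ∨ IsTriv Y := by
  have hd := h.isUnit_det
  rw [Matrix.det_mul] at hd
  have hXd := isUnit_of_mul_isUnit_left hd
  have hYd := isUnit_of_mul_isUnit_right hd
  obtain ⟨U, V, hU, hV, h⟩ := h
  have h' : (U * X) * (Y * V) = famMat n := by
    calc (U * X) * (Y * V) = U * (X * Y) * V := by simp only [mul_assoc]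
      _ = (U * U) * famMat n * (V * V) := by rw [h]; simp only [mul_assoc]
      _ = famMat n := by rw [hU.mul_self, hV.mul_self, one_mul, mul_one]
  rcases famMat_irreducible_aux (hU.good.mul hX) (hY.mul hV.good)
    (by rw [Matrix.det_mul]; exact hU.isUnit_det.mul hXd)
    (by rw [Matrix.det_mul]; exact hYd.mul hV.isUnit_det) h' with h1 | h1
  · exact Or.inl (hU.of_mul_left h1)
  · exact Or.inr (hV.of_mul_right h1)

lemma IsFam.entry_sum {n : ℕ} {M : Matrix (Fin 3) (Fin 3) ℤ} (h : IsFam n M) :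
    ∑ i, ∑ j, M i j = 2 * n + 5 := by
  obtain ⟨U, V, rfl | rfl, rfl | rfl, rfl⟩ := h <;>
    simp [famMat, swapMat, Matrix.mul_apply, Fin.sum_univ_three] <;> ring

lemma IsTriv.entry_sum {M : Matrix (Fin 3) (Fin 3) ℤ} (h : IsTriv M) :
    ∑ i, ∑ j, M i j = 3 := by
  rcases h with rfl | rfl <;> decide

lemma good_list_prod {l : List (Matrix (Fin 3) (Fin 3) ℤ)} (hl : ∀ s ∈ l, Good s) :
    Good l.prod := by
  induction l with
  | nil => exact isTriv_one.good
  | cons s l ih =>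
    rw [List.prod_cons]
    exact (hl s (by simp)).mul (ih fun t ht => hl t (by simp [ht]))

/-- A member of the family, up to trivial factors, must occur among the factors of any
factorization of it. -/
lemma IsFam.exists_factor {n : ℕ} {l : List (Matrix (Fin 3) (Fin 3) ℤ)} (hl : ∀ s ∈ l, Good s)
    (h : IsFam n l.prod) : ∃ s ∈ l, IsFam n s := by
  induction l with
  | nil =>
    have h1 := h.entry_sum
    rw [List.prod_nil, isTriv_one.entry_sum] at h1
    omega
  | cons s l ih =>
    rw [List.prod_cons] at h
    have hl' : ∀ t ∈ l, Good t := fun t ht => hl t (by simp [ht])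
    rcases IsFam.irreducible (hl s (by simp)) (good_list_prod hl') h with hs | hs
    · obtain ⟨U, V, hU, hV, h⟩ := h
      have h' : IsFam n l.prod := by
        refine ⟨s * U, V, hs.mul hU, hV, ?_⟩
        rw [mul_assoc, mul_assoc, ← mul_assoc U, ← h, ← mul_assoc, hs.mul_self, one_mul]
      obtain ⟨t, ht, h2⟩ := ih hl' h'
      exact ⟨t, by simp [ht], h2⟩
    · obtain ⟨U, V, hU, hV, h⟩ := h
      refine ⟨s, by simp, U, V * l.prod, hU, hV.mul hs, ?_⟩
      rw [← mul_assoc, ← h, mul_assoc, hs.mul_self, mul_one]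

/-- The monoid R(Φ_3iet) is not finitely generated: there is no finite set S
of matrices contained in R(Φ_3iet) such that the multiplicative submonoid
generated by S equals R(Φ_3iet). -/
theorem RPhi3iet_not_finitely_generated :
    ¬ ∃ S : Finset (Matrix (Fin 3) (Fin 3) ℤ),
      (↑S : Set (Matrix (Fin 3) (Fin 3) ℤ)) ⊆ RPhi3iet ∧
      ∀ M : Matrix (Fin 3) (Fin 3) ℤ,
        M ∈ RPhi3iet ↔ M ∈ Submonoid.closure (↑S : Set (Matrix (Fin 3) (Fin 3) ℤ)) := by
  rintro ⟨S, hS, hgen⟩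
  have hfac : ∀ n : ℕ, ∃ s ∈ S, ∑ i, ∑ j, s i j = 2 * (n : ℤ) + 5 := by
    intro n
    have hmem := (hgen (famMat n)).1 (famMat_mem n)
    obtain ⟨l, hl, hprod⟩ := Submonoid.exists_list_of_mem_closure hmem
    have hfam : IsFam n l.prod := ⟨1, 1, Or.inl rfl, Or.inl rfl, by rw [hprod, one_mul, mul_one]⟩
    obtain ⟨s, hs, h⟩ := hfam.exists_factor fun s hs => good_of_mem (hS (hl s hs))
    exact ⟨s, hl s hs, h.entry_sum⟩
  choose f hfS hf using hfac
  have hinj : Function.Injective fun n => (⟨f n, hfS n⟩ : S) := by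
    intro m n hmn
    have h1 : f m = f n := congrArg Subtype.val hmn
    have h2 := hf m
    rw [h1, hf n] at h2
    omega
  exact not_injective_infinite_finite _ hinj
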